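/- arXiv:2205.01487 — 3 statements merged into one kernel-verified Lean document; each statement's English description precedes it below -/
import Mathlib

section
/- Suppose φ : ℝ → ℝ is bounded, φ' is absolutely continuous with φ'' = Vφ almost everywhere, and φ(x) → 1 as x → +∞. Then the limit a := lim_{x→−∞} φ(x) exists, a ∈ {1,−1}, and φ(−x) = a·φ(x) for all x ∈ ℝ; in particular φ is even if a = 1 and odd if a = −1. -/
open MeasureTheory Filter Topology Set

noncomputable def jap (x : ℝ) : ℝ := Real.sqrt (1 + x ^ 2)

/-!
If `φ` solves `φ'' = V φ` with `V` even, so does its reflection `ψ x = φ (-x)`, and the Wronskian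
`W` of `φ` and `ψ` is constant. Near `+∞`, where `φ` is close to a nonzero limit `ℓ`, we have
`(ψ / φ)' = W / φ ^ 2 → W / ℓ ^ 2`, so `ψ` would grow linearly unless `W = 0`. Hence `ψ` is a
multiple of `φ`, and reflecting twice shows that the factor squares to `1`.
-/

section Asymptotics

variable {E : Type*} [NormedAddCommGroup E] [NormedSpace ℝ E] {h h' : ℝ → E}

lemma isLittleO_id_of_tendsto_hasDerivAt_zero (hderiv : ∀ᶠ x in atTop, HasDerivAt h (h' x) x)
    (hlim : Tendsto h' atTop (𝓝 0)) : h =o[atTop] (id : ℝ → ℝ) := by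
  refine Asymptotics.isLittleO_iff.2 fun ε hε => ?_
  have hsmall : ∀ᶠ x in atTop, ‖h' x‖ < ε / 2 :=
    hlim.norm.eventually_lt_const (by simpa only [norm_zero] using half_pos hε)
  obtain ⟨X, hX⟩ := eventually_atTop.1 ((hderiv.and hsmall).and (eventually_ge_atTop 0))
  have hX0 : 0 ≤ X := (hX X le_rfl).2
  have hconst : (fun _ : ℝ => h X) =o[atTop] (id : ℝ → ℝ) :=
    Asymptotics.isLittleO_const_id_atTop _
  filter_upwards [eventually_ge_atTop X, hconst.bound (half_pos hε)] with x hx hhX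
  have hmean : ‖h x - h X‖ ≤ ε / 2 * ‖x - X‖ :=
    (convex_Ici X).norm_image_sub_le_of_norm_hasDerivWithin_le
      (fun y hy => (hX y hy).1.1.hasDerivWithinAt) (fun y hy => (hX y hy).1.2.le) self_mem_Ici hx
  calc ‖h x‖ = ‖h X + (h x - h X)‖ := by rw [add_sub_cancel]
    _ ≤ ‖h X‖ + ‖h x - h X‖ := norm_add_le _ _
    _ ≤ ε / 2 * ‖x‖ + ε / 2 * ‖x‖ := by
        refine add_le_add hhX (hmean.trans ?_)
        gcongr
        rw [Real.norm_of_nonneg (sub_nonneg.2 hx), Real.norm_of_nonneg (hX0.trans hx)]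
        exact sub_le_self x hX0
    _ = ε * ‖id x‖ := by rw [← add_mul, add_halves, id]

lemma eq_zero_of_tendsto_hasDerivAt_of_isLittleO_id {c : E}
    (hderiv : ∀ᶠ x in atTop, HasDerivAt h (h' x) x) (hlim : Tendsto h' atTop (𝓝 c))
    (hh : h =o[atTop] (id : ℝ → ℝ)) : c = 0 := by
  have hsub : (fun x => h x - x • c) =o[atTop] (id : ℝ → ℝ) := by
    refine isLittleO_id_of_tendsto_hasDerivAt_zero (h' := fun x => h' x - c) ?_
      (tendsto_sub_nhds_zero_iff.2 hlim)
    filter_upwards [hderiv] with x hx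
    simpa only [one_smul] using hx.fun_sub ((hasDerivAt_id' x).smul_const c)
  have hlinear : (fun x : ℝ => x • c) =o[atTop] (id : ℝ → ℝ) := by
    simpa using hh.sub hsub
  by_contra hc
  have hid : (id : ℝ → ℝ) =O[atTop] fun x : ℝ => x • c :=
    Asymptotics.IsBigO.of_bound ‖c‖⁻¹ <| Eventually.of_forall fun x => by
      rw [norm_smul, mul_left_comm, inv_mul_cancel₀ (norm_ne_zero_iff.2 hc), mul_one, id]
  exact Asymptotics.isLittleO_irrefl (eventually_ne_atTop 0).frequently
    (hid.trans_isLittleO hlinear)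

end Asymptotics

lemma intervalIntegrable_of_locallyIntegrable {E : Type*} [NormedAddCommGroup E] {g : ℝ → E}
    (hg : LocallyIntegrable g) (a b : ℝ) : IntervalIntegrable g volume a b :=
  (hg.integrableOn_isCompact isCompact_uIcc).intervalIntegrable

/-- The function `f`, with derivative `f'`, is a solution of the zero-energy Schrödinger equation
`f'' = V f`. That `f'` is absolutely continuous with `f'' = V f` almost everywhere is encoded by the
integral identity for `f'`. -/
structure IsZeroEnergySolution (V f f' : ℝ → ℝ) : Prop where
  hasDerivAt : ∀ x, HasDerivAt f (f' x) x
  deriv_eq : ∀ x, f' x = f' 0 + ∫ t in (0 : ℝ)..x, V t * f t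

/-- The Wronskian of `f` and `u`, whose derivatives are passed as the arguments `f'` and `u'`. It is
constant for two zero-energy solutions and measures their linear dependence. -/
def wronskian (f f' u u' : ℝ → ℝ) (x : ℝ) : ℝ := f x * u' x - f' x * u x

namespace IsZeroEnergySolution

variable {V f f' u u' : ℝ → ℝ}

lemma continuous (hf : IsZeroEnergySolution V f f') : Continuous f :=
  continuous_iff_continuousAt.2 fun x => (hf.hasDerivAt x).continuousAt

lemma comp_neg (hf : IsZeroEnergySolution V f f') (hV : ∀ᵐ x, V (-x) = V x) :
    IsZeroEnergySolution V (fun x => f (-x)) (fun x => -f' (-x)) where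
  hasDerivAt x := by
    simpa only [Function.comp_def, neg_one_smul] using
      (hf.hasDerivAt (-x)).scomp x (hasDerivAt_neg x)
  deriv_eq x := by
    have hreflect : ∫ t in (0 : ℝ)..x, V t * f (-t) = -∫ t in (0 : ℝ)..-x, V t * f t := by
      calc ∫ t in (0 : ℝ)..x, V t * f (-t)
          = ∫ t in (0 : ℝ)..x, V (-t) * f (-t) := by
            refine intervalIntegral.integral_congr_ae ?_
            filter_upwards [hV] with t ht _
            rw [ht]
        _ = ∫ t in -x..-0, V t * f t := intervalIntegral.integral_comp_neg fun t => V t * f t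
        _ = -∫ t in (0 : ℝ)..-x, V t * f t := by
            rw [neg_zero, intervalIntegral.integral_symm]
    rw [hreflect, hf.deriv_eq (-x), neg_zero, neg_add]

section LocallyIntegrable

variable (hV : LocallyIntegrable V)
include hV

lemma locallyIntegrable_mul (hf : IsZeroEnergySolution V f f') :
    LocallyIntegrable fun t => V t * f t :=
  hV.smul_continuous hf.continuous

lemma intervalIntegrable_mul (hf : IsZeroEnergySolution V f f') (a b : ℝ) :
    IntervalIntegrable (fun t => V t * f t) volume a b :=
  intervalIntegrable_of_locallyIntegrable (hf.locallyIntegrable_mul hV) a b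

lemma deriv_sub_deriv (hf : IsZeroEnergySolution V f f') (x y : ℝ) :
    f' y - f' x = ∫ t in x..y, V t * f t := by
  rw [hf.deriv_eq y, hf.deriv_eq x, add_sub_add_left_eq_sub,
    intervalIntegral.integral_interval_sub_left (hf.intervalIntegrable_mul hV 0 y)
      (hf.intervalIntegrable_mul hV 0 x)]

lemma sub_const_mul (hf : IsZeroEnergySolution V f f') (hu : IsZeroEnergySolution V u u') (c : ℝ) :
    IsZeroEnergySolution V (fun x => u x - c * f x) (fun x => u' x - c * f' x) where
  hasDerivAt x := (hu.hasDerivAt x).sub ((hf.hasDerivAt x).const_mul c)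
  deriv_eq x := by
    have hintegral : ∫ t in (0 : ℝ)..x, V t * (u t - c * f t)
        = (∫ t in (0 : ℝ)..x, V t * u t) - c * ∫ t in (0 : ℝ)..x, V t * f t := by
      rw [← intervalIntegral.integral_const_mul, ← intervalIntegral.integral_sub
        (hu.intervalIntegrable_mul hV 0 x) ((hf.intervalIntegrable_mul hV 0 x).const_mul c)]
      simp only [mul_sub, mul_left_comm]
    rw [hintegral, hu.deriv_eq x, hf.deriv_eq x]
    ring

lemma absolutelyContinuousOnInterval_deriv (hf : IsZeroEnergySolution V f f') (a b : ℝ) :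
    AbsolutelyContinuousOnInterval f' a b := by
  have hprimitive : f' = (fun _ => f' a) + fun x => ∫ t in a..x, V t * f t :=
    funext fun x => by simp [← hf.deriv_sub_deriv hV a x]
  rw [hprimitive]
  exact contDiffOn_const.absolutelyContinuousOnInterval.add <|
    (hf.intervalIntegrable_mul hV a b).absolutelyContinuousOnInterval_intervalIntegral left_mem_uIcc

lemma continuous_deriv (hf : IsZeroEnergySolution V f f') : Continuous f' :=
  (continuous_const.add
    (intervalIntegral.continuous_primitive (hf.intervalIntegrable_mul hV) 0)).congr
    fun x => (hf.deriv_eq x).symm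

lemma absolutelyContinuousOnInterval (hf : IsZeroEnergySolution V f f') (a b : ℝ) :
    AbsolutelyContinuousOnInterval f a b := by
  have hderiv : deriv f = f' := funext fun x => (hf.hasDerivAt x).deriv
  exact (contDiff_one_iff_deriv.2 ⟨fun x => (hf.hasDerivAt x).differentiableAt,
    hderiv ▸ hf.continuous_deriv hV⟩).contDiffOn.absolutelyContinuousOnInterval

lemma ae_hasDerivAt_deriv (hf : IsZeroEnergySolution V f f') :
    ∀ᵐ x, HasDerivAt f' (V x * f x) x := by
  filter_upwards [LocallyIntegrable.ae_hasDerivAt_integral (hf.locallyIntegrable_mul hV)] with x hx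
  exact ((hx 0).const_add (f' 0)).congr_of_eventuallyEq (Eventually.of_forall hf.deriv_eq)

theorem wronskian_eq (hf : IsZeroEnergySolution V f f') (hu : IsZeroEnergySolution V u u')
    (x y : ℝ) : wronskian f f' u u' x = wronskian f f' u u' y := by
  have hac : AbsolutelyContinuousOnInterval (wronskian f f' u u') x y :=
    ((hf.absolutelyContinuousOnInterval hV x y).mul
      (hu.absolutelyContinuousOnInterval_deriv hV x y)).sub
    ((hf.absolutelyContinuousOnInterval_deriv hV x y).mul
      (hu.absolutelyContinuousOnInterval hV x y))
  have hderiv : ∀ᵐ t, t ∈ uIcc x y → HasDerivAt (wronskian f f' u u') 0 t := by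
    filter_upwards [hf.ae_hasDerivAt_deriv hV, hu.ae_hasDerivAt_deriv hV] with t hft hut _
    refine (((hf.hasDerivAt t).mul hut).sub (hft.mul (hu.hasDerivAt t))).congr_deriv ?_
    ring
  obtain ⟨C, hC⟩ := hac.const_of_ae_hasDerivAt_zero hderiv
  rw [hC x left_mem_uIcc, hC y right_mem_uIcc]

lemma norm_deriv_le (hf : IsZeroEnergySolution V f f') {x₀ x M : ℝ} (h₀' : f' x₀ = 0)
    (hM : ∀ t ∈ uIcc x₀ x, ‖f t‖ ≤ M) : ‖f' x‖ ≤ |∫ t in x₀..x, ‖V t‖| * M := by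
  have hbound : ∀ t ∈ uIoc x₀ x, ‖V t * f t‖ ≤ ‖V t‖ * M := fun t ht => by
    rw [norm_mul]
    exact mul_le_mul_of_nonneg_left (hM t (uIoc_subset_uIcc ht)) (norm_nonneg _)
  have hM0 : 0 ≤ M := (norm_nonneg _).trans (hM x₀ left_mem_uIcc)
  calc ‖f' x‖ = ‖∫ t in x₀..x, V t * f t‖ := by rw [← hf.deriv_sub_deriv hV, h₀', sub_zero]
    _ ≤ |∫ t in x₀..x, ‖V t‖ * M| :=
        intervalIntegral.norm_integral_le_abs_of_norm_le
          ((ae_restrict_iff' measurableSet_uIoc).2 (Eventually.of_forall hbound))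
          ((intervalIntegrable_of_locallyIntegrable hV x₀ x).norm.mul_const M)
    _ = |∫ t in x₀..x, ‖V t‖| * M := by
        rw [intervalIntegral.integral_mul_const, abs_mul, abs_of_nonneg hM0]

-- On a small interval the equation bounds `max |f|` by half of itself.
lemma eventually_eq_zero (hf : IsZeroEnergySolution V f f') {x₀ : ℝ} (h₀ : f x₀ = 0)
    (h₀' : f' x₀ = 0) : ∀ᶠ x in 𝓝 x₀, f x = 0 ∧ f' x = 0 := by
  have hprimitive : Continuous fun x => ∫ t in x₀..x, ‖V t‖ :=
    intervalIntegral.continuous_primitive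
      (fun a b => (intervalIntegrable_of_locallyIntegrable hV a b).norm) x₀
  have hsmall : ∀ᶠ x in 𝓝 x₀, |∫ t in x₀..x, ‖V t‖| < 1 / 2 ∧ x ∈ Metric.ball x₀ 1 :=
    (hprimitive.abs.tendsto' x₀ 0 (by simp) |>.eventually_lt_const (by norm_num)).and
      (Metric.ball_mem_nhds x₀ one_pos)
  obtain ⟨δ, hδ, hsub⟩ := Metric.nhds_basis_closedBall.mem_iff.1 hsmall
  have hx₀ : x₀ ∈ Metric.closedBall x₀ δ := Metric.mem_closedBall_self hδ.le
  obtain ⟨m, hm, hmax⟩ := (isCompact_closedBall x₀ δ).exists_isMaxOn ⟨x₀, hx₀⟩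
    hf.continuous.norm.continuousOn
  have hderiv_le : ∀ x ∈ Metric.closedBall x₀ δ, ‖f' x‖ ≤ 1 / 2 * ‖f m‖ := fun x hx => by
    refine (hf.norm_deriv_le hV h₀' fun t ht => hmax ?_).trans
      (mul_le_mul_of_nonneg_right (hsub hx).1.le (norm_nonneg _))
    exact (convex_closedBall x₀ δ).ordConnected.uIcc_subset hx₀ hx ht
  have hmean : ‖f m‖ ≤ 1 / 2 * ‖f m‖ * ‖m - x₀‖ := by
    simpa only [h₀, sub_zero] using
      (convex_closedBall x₀ δ).norm_image_sub_le_of_norm_hasDerivWithin_le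
        (fun x _ => (hf.hasDerivAt x).hasDerivWithinAt) hderiv_le hx₀ hm
  have hfm : ‖f m‖ = 0 := by nlinarith [mem_ball_iff_norm.1 (hsub hm).2, norm_nonneg (f m)]
  filter_upwards [Metric.closedBall_mem_nhds x₀ hδ] with x hx
  refine ⟨norm_le_zero_iff.1 (hfm ▸ hmax hx), norm_le_zero_iff.1 ?_⟩
  simpa only [hfm, mul_zero] using hderiv_le x hx

theorem eq_zero_of_eq_zero_of_deriv_eq_zero (hf : IsZeroEnergySolution V f f') {x₀ : ℝ}
    (h₀ : f x₀ = 0) (h₀' : f' x₀ = 0) (x : ℝ) : f x = 0 := by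
  have hclopen : IsClopen {x | f x = 0 ∧ f' x = 0} :=
    ⟨(isClosed_singleton.preimage hf.continuous).inter
        (isClosed_singleton.preimage (hf.continuous_deriv hV)),
      isOpen_iff_mem_nhds.2 fun _ hx => hf.eventually_eq_zero hV hx.1 hx.2⟩
  exact (hclopen.eq_univ ⟨x₀, h₀, h₀'⟩ ▸ mem_univ x : x ∈ {x | f x = 0 ∧ f' x = 0}).1

theorem exists_eq_const_mul_of_wronskian_eq_zero (hf : IsZeroEnergySolution V f f')
    (hu : IsZeroEnergySolution V u u') {x₀ : ℝ} (h₀ : f x₀ ≠ 0)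
    (hW : wronskian f f' u u' x₀ = 0) : ∃ c, ∀ x, u x = c * f x := by
  refine ⟨u x₀ / f x₀, fun x => sub_eq_zero.1 ?_⟩
  refine (hf.sub_const_mul hV hu (u x₀ / f x₀)).eq_zero_of_eq_zero_of_deriv_eq_zero hV
    (x₀ := x₀) ?_ ?_ x
  · rw [div_mul_cancel₀ _ h₀, sub_self]
  · rw [wronskian] at hW
    field_simp
    linarith

variable {ℓ : ℝ}

theorem wronskian_eq_zero (hf : IsZeroEnergySolution V f f') (hu : IsZeroEnergySolution V u u')
    (hℓ : ℓ ≠ 0) (hlim : Tendsto f atTop (𝓝 ℓ)) (hgrowth : u =o[atTop] (id : ℝ → ℝ)) (x : ℝ) :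
    wronskian f f' u u' x = 0 := by
  set W := wronskian f f' u u' x with hW
  have hderiv : ∀ᶠ y in atTop, HasDerivAt (fun y => u y / f y) (W / f y ^ 2) y := by
    filter_upwards [hlim.eventually_ne hℓ] with y hy
    refine ((hu.hasDerivAt y).div (hf.hasDerivAt y) hy).congr_deriv ?_
    rw [hW, hf.wronskian_eq hV hu x y, wronskian]
    ring
  have hquot : (fun y => u y / f y) =o[atTop] (id : ℝ → ℝ) := by
    simpa only [div_eq_mul_inv, mul_one] using
      hgrowth.mul_isBigO ((hlim.inv₀ hℓ).isBigO_one ℝ)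
  have hzero : W / ℓ ^ 2 = 0 := eq_zero_of_tendsto_hasDerivAt_of_isLittleO_id hderiv
    (tendsto_const_nhds.div (hlim.pow 2) (pow_ne_zero 2 hℓ)) hquot
  exact (div_eq_zero_iff.1 hzero).resolve_right (pow_ne_zero 2 hℓ)

theorem exists_eq_const_mul (hf : IsZeroEnergySolution V f f') (hu : IsZeroEnergySolution V u u')
    (hℓ : ℓ ≠ 0) (hlim : Tendsto f atTop (𝓝 ℓ)) (hgrowth : u =o[atTop] (id : ℝ → ℝ)) :
    ∃ c, ∀ x, u x = c * f x := by
  obtain ⟨x₀, h₀⟩ := (hlim.eventually_ne hℓ).exists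
  exact hf.exists_eq_const_mul_of_wronskian_eq_zero hV hu h₀
    (hf.wronskian_eq_zero hV hu hℓ hlim hgrowth x₀)

end LocallyIntegrable

end IsZeroEnergySolution

lemma one_le_jap (x : ℝ) : 1 ≤ jap x :=
  Real.one_le_sqrt.2 (le_add_of_nonneg_right (sq_nonneg x))

lemma locallyIntegrable_of_integrable_jap_mul_abs {V : ℝ → ℝ} (hV : AEStronglyMeasurable V)
    (hint : Integrable fun y => jap y * |V y|) : LocallyIntegrable V :=
  (hint.mono' hV <| Eventually.of_forall fun x =>
    le_mul_of_one_le_left (abs_nonneg _) (one_le_jap x)).locallyIntegrable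

lemma isLittleO_id_atBot_of_abs_le {f : ℝ → ℝ} {B : ℝ} (hf : ∀ x, |f x| ≤ B) :
    f =o[atBot] (id : ℝ → ℝ) :=
  (Asymptotics.isBigO_of_le' (c := B) _ fun x => by simpa using hf x :
    f =O[atBot] fun _ => (1 : ℝ)).trans_isLittleO (Asymptotics.isLittleO_const_id_atBot 1)

lemma eq_one_or_eq_neg_one_of_comp_neg {f : ℝ → ℝ} {a x₀ : ℝ} (hf : ∀ x, f (-x) = a * f x)
    (h₀ : f x₀ ≠ 0) : a = 1 ∨ a = -1 := by
  refine mul_self_eq_one_iff.1 (mul_right_cancel₀ h₀ ?_)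
  rw [mul_assoc, ← hf, ← hf, neg_neg, one_mul]

theorem statement_3_general {V φ φd : ℝ → ℝ} {ℓ : ℝ} (hV : LocallyIntegrable V)
    (hVeven : ∀ᵐ x, V (-x) = V x) (hφ : IsZeroEnergySolution V φ φd)
    (hgrowth : φ =o[atBot] (id : ℝ → ℝ)) (hℓ : ℓ ≠ 0) (hlim : Tendsto φ atTop (𝓝 ℓ)) :
    ∃ a : ℝ, Tendsto φ atBot (𝓝 (a * ℓ)) ∧ (a = 1 ∨ a = -1) ∧ ∀ x, φ (-x) = a * φ x := by
  have hgrowth' : (fun x => φ (-x)) =o[atTop] (id : ℝ → ℝ) :=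
    Asymptotics.isLittleO_neg_right.1 (hgrowth.comp_tendsto tendsto_neg_atTop_atBot)
  obtain ⟨a, ha⟩ := hφ.exists_eq_const_mul hV (hφ.comp_neg hVeven) hℓ hlim hgrowth'
  obtain ⟨x₀, h₀⟩ := (hlim.eventually_ne hℓ).exists
  refine ⟨a, ?_, eq_one_or_eq_neg_one_of_comp_neg ha h₀, ha⟩
  refine ((hlim.comp tendsto_neg_atBot_atTop).const_mul a).congr fun x => ?_
  rw [Function.comp_apply, ← ha, neg_neg]

/-- If `V` is even (a.e.), `φ` is a bounded zero-energy solution (`φ'` absolutely continuous with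
`φ'' = Vφ` a.e., encoded by the integral identity for the everywhere-derivative `φd`), and
`φ(x) → 1` as `x → +∞`, then `φ(x) → a` as `x → −∞` with `a ∈ {1,−1}` and `φ(−x) = a φ(x)`. -/
theorem statement_3 (V : ℝ → ℝ) (hVmeas : Measurable V)
    (hVint : Integrable (fun y : ℝ => jap y * |V y|))
    (hVeven : ∀ᵐ x ∂(volume : Measure ℝ), V (-x) = V x)
    (φ φd : ℝ → ℝ)
    (hbd : ∃ B : ℝ, ∀ x, |φ x| ≤ B)
    (hderiv : ∀ x, HasDerivAt φ (φd x) x)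
    (hode : ∀ x, φd x = φd 0 + ∫ t in (0:ℝ)..x, V t * φ t)
    (hlim : Tendsto φ atTop (𝓝 1)) :
    ∃ a : ℝ, Tendsto φ atBot (𝓝 a) ∧ (a = 1 ∨ a = -1) ∧ ∀ x, φ (-x) = a * φ x := by
  simpa only [mul_one] using statement_3_general
    (locallyIntegrable_of_integrable_jap_mul_abs hVmeas.aestronglyMeasurable hVint) hVeven
    ⟨hderiv, hode⟩ (isLittleO_id_atBot_of_abs_le hbd.choose_spec) one_ne_zero hlim
end

section
/- There exists a universal constant C > 0 with the following property. Let B ⊆ ℝ, and let a : B × (0,∞) → ℂ be such that for each x ∈ B the map k ↦ a(x,k) is C¹ and |a(x,k)| + |k|·|∂_k a(x,k)| ≤ 1 for all x ∈ B and k > 0. Then for every t > 0, X ∈ ℝ, x ∈ B and every compactly supported C¹ function h : (0,∞) → ℂ, one has |∫_0^∞ e^{it(k−X)²} a(x,k) h(k) dk| ≤ C ( t^{−1/2} ‖h‖_{L^∞} + t^{−3/4} ‖h'‖_{L²(0,∞)} ). -/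
open MeasureTheory Filter Topology Set

/-!
Cut `(0, ∞)` at the scale `δ = t^{-1/2}`. On `(0, δ]` and on `|k - X| ≤ δ` the integrand is bounded
by `‖h‖_∞` and the length is at most `3δ`. On the remaining (at most two) intervals write
`e^{it(k-X)²} = (e^{it(k-X)²})' / (2it(k-X))` and integrate by parts. With `g = a h` one has
`|g'| ≤ ‖h‖_∞ / k + |h'|`, and every resulting term is controlled by Cauchy–Schwarz and
`∫_{|k-c| ≥ δ} (k-c)⁻² dk ≲ δ⁻¹`, used for the stationary point `c = X` and for the singularity
`c = 0` of the amplitude.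
-/

lemma integral_mul_le_sqrt_mul_sqrt {Ω : Type*} [MeasurableSpace Ω] {μ : Measure Ω} {f g : Ω → ℝ}
    (hf : MemLp f 2 μ) (hg : MemLp g 2 μ) :
    ∫ ω, f ω * g ω ∂μ ≤ √(∫ ω, f ω ^ 2 ∂μ) * √(∫ ω, g ω ^ 2 ∂μ) := by
  calc ∫ ω, f ω * g ω ∂μ
      ≤ ∫ ω, ‖f ω‖ * ‖g ω‖ ∂μ :=
        integral_mono (hf.integrable_mul hg) (hf.norm.integrable_mul hg.norm)
          fun ω => (le_abs_self _).trans_eq (abs_mul _ _)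
    _ ≤ (∫ ω, ‖f ω‖ ^ (2 : ℝ) ∂μ) ^ (1 / 2 : ℝ) * (∫ ω, ‖g ω‖ ^ (2 : ℝ) ∂μ) ^ (1 / 2 : ℝ) :=
        integral_mul_norm_le_Lp_mul_Lq Real.HolderConjugate.two_two
          (by simpa using hf) (by simpa using hg)
    _ = √(∫ ω, f ω ^ 2 ∂μ) * √(∫ ω, g ω ^ 2 ∂μ) := by
        simp [Real.sqrt_eq_rpow]

lemma intervalIntegral_mul_le_sqrt_mul_sqrt {f g : ℝ → ℝ} {p q : ℝ} (hpq : p ≤ q)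
    (hf : ContinuousOn f (Icc p q)) (hg : ContinuousOn g (Icc p q)) :
    ∫ k in p..q, f k * g k ≤ √(∫ k in p..q, f k ^ 2) * √(∫ k in p..q, g k ^ 2) := by
  have memLp_two {φ : ℝ → ℝ} (hφ : ContinuousOn φ (Icc p q)) :
      MemLp φ 2 (volume.restrict (Ioc p q)) :=
    (memLp_two_iff_integrable_sq
      ((hφ.mono Ioc_subset_Icc_self).aestronglyMeasurable measurableSet_Ioc)).2
      ((hφ.pow 2).integrableOn_Icc.mono_set Ioc_subset_Icc_self)
  simpa only [intervalIntegral.integral_of_le hpq] using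
    integral_mul_le_sqrt_mul_sqrt (memLp_two hf) (memLp_two hg)

section InvSub

variable {f : ℝ → ℝ} {c p q δ : ℝ}

lemma continuousOn_inv_sub (hc : c ∉ Icc p q) :
    ContinuousOn (fun k : ℝ => (k - c)⁻¹) (Icc p q) :=
  ContinuousOn.inv₀ (by fun_prop) fun _ hk => sub_ne_zero.2 (ne_of_mem_of_not_mem hk hc)

lemma notMem_of_forall_le_abs_sub {s : Set ℝ} (hδ : 0 < δ) (hc : ∀ k ∈ s, δ ≤ |k - c|) :
    c ∉ s := fun hcs => by
  simpa using hδ.trans_le (hc c hcs)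

lemma integral_inv_sub_sq (hpq : p ≤ q) (hc : c ∉ Icc p q) :
    ∫ k in p..q, (k - c)⁻¹ ^ 2 = (p - c)⁻¹ - (q - c)⁻¹ := by
  rw [← uIcc_of_le hpq] at hc
  have hderiv : ∀ k ∈ uIcc p q, HasDerivAt (fun k => -(k - c)⁻¹) ((k - c)⁻¹ ^ 2) k := fun k hk => by
    have hne : k - c ≠ 0 := sub_ne_zero.2 (ne_of_mem_of_not_mem hk hc)
    refine (((hasDerivAt_id k).sub_const c).fun_inv hne).fun_neg.congr_deriv ?_
    simp [neg_div]
  have hcont : ContinuousOn (fun k : ℝ => (k - c)⁻¹ ^ 2) (uIcc p q) :=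
    (continuousOn_inv_sub hc).pow 2
  rw [intervalIntegral.integral_eq_sub_of_hasDerivAt hderiv hcont.intervalIntegrable]
  ring

lemma integral_inv_sub_sq_le (hpq : p ≤ q) (hδ : 0 < δ) (hc : ∀ k ∈ Icc p q, δ ≤ |k - c|) :
    ∫ k in p..q, (k - c)⁻¹ ^ 2 ≤ δ⁻¹ := by
  have hcpq : c ∉ Icc p q := notMem_of_forall_le_abs_sub hδ hc
  rw [integral_inv_sub_sq hpq hcpq]
  rcases lt_or_ge c p with hcp | hpc
  · have hp : δ ≤ p - c := by simpa [abs_of_pos (sub_pos.2 hcp)] using hc p (left_mem_Icc.2 hpq)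
    have hp_inv : (p - c)⁻¹ ≤ δ⁻¹ := inv_anti₀ hδ hp
    have hq_inv : 0 ≤ (q - c)⁻¹ := inv_nonneg.2 (by linarith)
    linarith
  · have hqc : q < c := not_le.1 fun hcq => hcpq ⟨hpc, hcq⟩
    have hq : δ ≤ c - q := by
      simpa [abs_of_neg (sub_neg.2 hqc)] using hc q (right_mem_Icc.2 hpq)
    have hq_inv : -(q - c)⁻¹ ≤ δ⁻¹ := by
      rw [← inv_neg, neg_sub]
      exact inv_anti₀ hδ hq
    have hp_inv : (p - c)⁻¹ ≤ 0 := inv_nonpos.2 (by linarith)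
    linarith

lemma integral_mul_abs_inv_sub_le (hpq : p ≤ q) (hδ : 0 < δ) (hc : ∀ k ∈ Icc p q, δ ≤ |k - c|)
    (hf : ContinuousOn f (Icc p q)) :
    ∫ k in p..q, f k * |(k - c)⁻¹| ≤ √(∫ k in p..q, f k ^ 2) * √δ⁻¹ := by
  have hinv : ContinuousOn (fun k : ℝ => |(k - c)⁻¹|) (Icc p q) :=
    (continuousOn_inv_sub (notMem_of_forall_le_abs_sub hδ hc)).abs
  refine (intervalIntegral_mul_le_sqrt_mul_sqrt hpq hf hinv).trans ?_
  simp only [sq_abs]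
  gcongr
  exact integral_inv_sub_sq_le hpq hδ hc

end InvSub

/-- The quadratic phase `e^{it(k-X)²}`, the oscillating factor of the integral: frequency parameter
`t`, stationary point `X`. -/
noncomputable def chirp (t X k : ℝ) : ℂ :=
  Complex.exp (Complex.I * (t : ℂ) * ((k : ℂ) - (X : ℂ)) ^ 2)

section Chirp

variable {E : Type*} [NormedAddCommGroup E] [NormedSpace ℂ E]
  {g g' : ℝ → E} {η : ℝ → ℝ} {t X p q δ M : ℝ}

lemma norm_chirp (t X k : ℝ) : ‖chirp t X k‖ = 1 := by
  have hphase : Complex.I * (t : ℂ) * ((k : ℂ) - (X : ℂ)) ^ 2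
      = ((t * (k - X) ^ 2 : ℝ) : ℂ) * Complex.I := by
    push_cast
    ring
  rw [chirp, hphase, Complex.norm_exp_ofReal_mul_I]

@[fun_prop]
lemma continuous_chirp (t X : ℝ) : Continuous (chirp t X) := by
  unfold chirp
  fun_prop

lemma hasDerivAt_chirp (t X k : ℝ) :
    HasDerivAt (chirp t X) (chirp t X k * (2 * Complex.I * t * ((k : ℂ) - X))) k := by
  have hsub : HasDerivAt (fun k : ℝ => (k : ℂ) - (X : ℂ)) 1 k :=
    (Complex.ofRealCLM.hasDerivAt (x := k)).sub_const _
  refine ((hsub.fun_pow 2).const_mul (Complex.I * (t : ℂ))).cexp.congr_deriv ?_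
  simp only [chirp, Nat.cast_ofNat]
  ring

lemma norm_chirp_smul (t X k : ℝ) (v : E) : ‖chirp t X k • v‖ = ‖v‖ := by
  rw [norm_smul, norm_chirp, one_mul]

lemma integrableOn_chirp_smul {s : Set ℝ} (t X : ℝ) (hg : IntegrableOn g s) :
    IntegrableOn (fun k => chirp t X k • g k) s :=
  hg.bdd_smul 1 (continuous_chirp t X).aestronglyMeasurable
    (ae_of_all _ fun k => (norm_chirp t X k).le)

lemma norm_integral_chirp_smul_le_mul_sub (hg_le : ∀ k ∈ Ioc p q, ‖g k‖ ≤ M) (hpq : p ≤ q) :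
    ‖∫ k in p..q, chirp t X k • g k‖ ≤ M * (q - p) := by
  rw [← abs_of_nonneg (sub_nonneg.2 hpq)]
  refine intervalIntegral.norm_integral_le_of_norm_le_const fun k hk => ?_
  exact (norm_chirp_smul t X k (g k)).trans_le (hg_le k (uIoc_of_le hpq ▸ hk))

lemma norm_integral_deriv_smul_le [CompleteSpace E] {u u' : ℝ → ℂ} {v v' : ℝ → E} (hpq : p ≤ q)
    (hu : ∀ k ∈ Icc p q, HasDerivAt u (u' k) k) (hv : ∀ k ∈ Icc p q, HasDerivAt v (v' k) k)
    (hu' : ContinuousOn u' (Icc p q)) (hv' : ContinuousOn v' (Icc p q))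
    (hu_le : ∀ k ∈ Icc p q, ‖u k‖ ≤ 1) :
    ‖∫ k in p..q, u' k • v k‖ ≤ ‖v p‖ + ‖v q‖ + ∫ k in p..q, ‖v' k‖ := by
  have hsmul_le {k : ℝ} (hk : k ∈ Icc p q) (w : E) : ‖u k • w‖ ≤ ‖w‖ := by
    rw [norm_smul]
    exact mul_le_of_le_one_left (norm_nonneg w) (hu_le k hk)
  have hrest : ‖∫ k in p..q, u k • v' k‖ ≤ ∫ k in p..q, ‖v' k‖ :=
    intervalIntegral.norm_integral_le_of_norm_le hpq
      (ae_of_all _ fun k hk => hsmul_le (Ioc_subset_Icc_self hk) _)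
      (hv'.norm.intervalIntegrable_of_Icc hpq)
  have hparts : ∫ k in p..q, u' k • v k
      = u q • v q - u p • v p - ∫ k in p..q, u k • v' k := by
    rw [intervalIntegral.integral_smul_deriv_eq_deriv_smul (uIcc_of_le hpq ▸ hu)
      (uIcc_of_le hpq ▸ hv) (hu'.intervalIntegrable_of_Icc hpq)
      (hv'.intervalIntegrable_of_Icc hpq), sub_sub_cancel]
  rw [hparts]
  have := norm_sub_le (u q • v q - u p • v p) (∫ k in p..q, u k • v' k)
  have := norm_sub_le (u q • v q) (u p • v p)
  have := hsmul_le (left_mem_Icc.2 hpq) (v p)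
  have := hsmul_le (right_mem_Icc.2 hpq) (v q)
  linarith

lemma hasDerivAt_inv_sub_smul {w : E} {k : ℝ} (hk : k ≠ X) (hg : HasDerivAt g w k) :
    HasDerivAt (fun k => (k - X)⁻¹ • g k) ((k - X)⁻¹ • w + (-(k - X)⁻¹ ^ 2) • g k) k := by
  have hinv := ((hasDerivAt_id k).sub_const X).fun_inv (sub_ne_zero.2 hk)
  refine (hinv.fun_smul hg).congr_deriv ?_
  simp [neg_div]

lemma norm_integral_chirp_smul_le [CompleteSpace E] (t : ℝ) (hpq : p ≤ q) (hX : X ∉ Icc p q)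
    (hg : ∀ k ∈ Icc p q, HasDerivAt g (g' k) k) (hg' : ContinuousOn g' (Icc p q)) :
    2 * |t| * ‖∫ k in p..q, chirp t X k • g k‖ ≤
      |(p - X)⁻¹| * ‖g p‖ + |(q - X)⁻¹| * ‖g q‖
        + ∫ k in p..q, (‖g' k‖ * |(k - X)⁻¹| + ‖g k‖ * (k - X)⁻¹ ^ 2) := by
  have hgc : ContinuousOn g (Icc p q) := fun k hk => (hg k hk).continuousAt.continuousWithinAt
  have := continuousOn_inv_sub hX
  set v : ℝ → E := fun k => (k - X)⁻¹ • g k with hv_def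
  set v' : ℝ → E := fun k => (k - X)⁻¹ • g' k + (-(k - X)⁻¹ ^ 2) • g k
  have hv : ∀ k ∈ Icc p q, HasDerivAt v (v' k) k := fun k hk =>
    hasDerivAt_inv_sub_smul (ne_of_mem_of_not_mem hk hX) (hg k hk)
  have hv'c : ContinuousOn v' (Icc p q) := by fun_prop
  have hv'_le (k : ℝ) : ‖v' k‖ ≤ ‖g' k‖ * |(k - X)⁻¹| + ‖g k‖ * (k - X)⁻¹ ^ 2 :=
    (norm_add_le _ _).trans_eq (by simp [norm_smul, mul_comm])
  have hchirp_smul : ∫ k in p..q, (chirp t X k * (2 * Complex.I * t * ((k : ℂ) - X))) • v k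
      = (2 * Complex.I * t) • ∫ k in p..q, chirp t X k • g k := by
    rw [← intervalIntegral.integral_smul]
    refine intervalIntegral.integral_congr fun k hk => ?_
    have hkX : (k : ℂ) - X ≠ 0 :=
      mod_cast sub_ne_zero.2 (ne_of_mem_of_not_mem (uIcc_of_le hpq ▸ hk) hX)
    simp only [hv_def, ← Complex.coe_smul, smul_smul]
    congr 1
    push_cast
    field_simp
  calc 2 * |t| * ‖∫ k in p..q, chirp t X k • g k‖
      = ‖∫ k in p..q, (chirp t X k * (2 * Complex.I * t * ((k : ℂ) - X))) • v k‖ := by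
        rw [hchirp_smul, norm_smul]
        simp
    _ ≤ ‖v p‖ + ‖v q‖ + ∫ k in p..q, ‖v' k‖ :=
        norm_integral_deriv_smul_le hpq (fun k _ => hasDerivAt_chirp t X k) hv
          (by fun_prop) hv'c fun k _ => (norm_chirp t X k).le
    _ ≤ |(p - X)⁻¹| * ‖g p‖ + |(q - X)⁻¹| * ‖g q‖
          + ∫ k in p..q, (‖g' k‖ * |(k - X)⁻¹| + ‖g k‖ * (k - X)⁻¹ ^ 2) := by
        simp only [hv_def, norm_smul, Real.norm_eq_abs]
        gcongr
        refine intervalIntegral.integral_mono_on hpq (hv'c.norm.intervalIntegrable_of_Icc hpq)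
          (ContinuousOn.intervalIntegrable_of_Icc hpq (by fun_prop)) fun k _ => hv'_le k

lemma integral_nonstationary_terms_le (hδ : 0 < δ) (hδp : δ ≤ p) (hpq : p ≤ q)
    (hX : ∀ k ∈ Icc p q, δ ≤ |k - X|) (hM : 0 ≤ M) (hη : ContinuousOn η (Icc p q)) :
    ∫ k in p..q, (M * (k⁻¹ * |(k - X)⁻¹|) + η k * |(k - X)⁻¹| + M * (k - X)⁻¹ ^ 2) ≤
      2 * M * δ⁻¹ + √(∫ k in p..q, η k ^ 2) * √δ⁻¹ := by
  have h0 : ∀ k ∈ Icc p q, δ ≤ |k - 0| := fun k hk => by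
    simpa using (hδp.trans hk.1).trans (le_abs_self k)
  have hinvX := continuousOn_inv_sub (notMem_of_forall_le_abs_sub hδ hX)
  have hinv0 : ContinuousOn (fun k : ℝ => k⁻¹) (Icc p q) := by
    simpa using continuousOn_inv_sub (notMem_of_forall_le_abs_sub hδ h0)
  have hint {φ : ℝ → ℝ} (hφ : ContinuousOn φ (Icc p q)) : IntervalIntegrable φ volume p q :=
    hφ.intervalIntegrable_of_Icc hpq
  have hinv_mul : ∫ k in p..q, k⁻¹ * |(k - X)⁻¹| ≤ δ⁻¹ := by
    calc ∫ k in p..q, k⁻¹ * |(k - X)⁻¹|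
        ≤ √(∫ k in p..q, k⁻¹ ^ 2) * √δ⁻¹ := integral_mul_abs_inv_sub_le hpq hδ hX hinv0
      _ ≤ √δ⁻¹ * √δ⁻¹ := by
          gcongr
          simpa using integral_inv_sub_sq_le hpq hδ h0
      _ = δ⁻¹ := Real.mul_self_sqrt (inv_nonneg.2 hδ.le)
  calc ∫ k in p..q, (M * (k⁻¹ * |(k - X)⁻¹|) + η k * |(k - X)⁻¹| + M * (k - X)⁻¹ ^ 2)
      = M * (∫ k in p..q, k⁻¹ * |(k - X)⁻¹|) + (∫ k in p..q, η k * |(k - X)⁻¹|)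
          + M * ∫ k in p..q, (k - X)⁻¹ ^ 2 := by
        rw [intervalIntegral.integral_add (hint (by fun_prop)) (hint (by fun_prop)),
          intervalIntegral.integral_add (hint (by fun_prop)) (hint (by fun_prop)),
          intervalIntegral.integral_const_mul, intervalIntegral.integral_const_mul]
    _ ≤ M * δ⁻¹ + √(∫ k in p..q, η k ^ 2) * √δ⁻¹ + M * δ⁻¹ := by
        gcongr
        · exact integral_mul_abs_inv_sub_le hpq hδ hX hη
        · exact integral_inv_sub_sq_le hpq hδ hX
    _ = 2 * M * δ⁻¹ + √(∫ k in p..q, η k ^ 2) * √δ⁻¹ := by ring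

/-- `g` is a `C¹` amplitude on `s` with derivative `g'` satisfying `‖g‖ ≤ M` and
`‖g'‖ ≤ M / k + η`, where `η` is continuous. This is what the stationary phase argument needs of a
product `g = α h` of a symbol `|α| + |k α'| ≤ 1` and a bounded function `‖h‖ ≤ M`, with
`η = ‖h'‖`. -/
structure IsAmplitudeOn (g g' : ℝ → E) (η : ℝ → ℝ) (M : ℝ) (s : Set ℝ) : Prop where
  hasDerivAt : ∀ k ∈ s, HasDerivAt g (g' k) k
  continuousOn_deriv : ContinuousOn g' s
  continuousOn_majorant : ContinuousOn η s
  norm_le : ∀ k ∈ s, ‖g k‖ ≤ M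
  norm_deriv_le : ∀ k ∈ s, ‖g' k‖ ≤ M * k⁻¹ + η k

lemma IsAmplitudeOn.mono {s s' : Set ℝ} (hg : IsAmplitudeOn g g' η M s') (hs : s ⊆ s') :
    IsAmplitudeOn g g' η M s where
  hasDerivAt k hk := hg.hasDerivAt k (hs hk)
  continuousOn_deriv := hg.continuousOn_deriv.mono hs
  continuousOn_majorant := hg.continuousOn_majorant.mono hs
  norm_le k hk := hg.norm_le k (hs hk)
  norm_deriv_le k hk := hg.norm_deriv_le k (hs hk)

lemma isAmplitudeOn_smul {α : ℝ → ℂ} {h : ℝ → E} (hα : ContDiffOn ℝ 1 α (Ioi 0))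
    (hα_le : ∀ k > 0, ‖α k‖ + |k| * ‖deriv α k‖ ≤ 1) (hh : ContDiffOn ℝ 1 h (Ioi 0))
    (hM : ∀ k > 0, ‖h k‖ ≤ M) :
    IsAmplitudeOn (fun k => α k • h k) (fun k => α k • deriv h k + deriv α k • h k)
      (fun k => ‖deriv h k‖) M (Ioi 0) := by
  have hα'c := hα.continuousOn_deriv_of_isOpen isOpen_Ioi le_rfl
  have hh'c := hh.continuousOn_deriv_of_isOpen isOpen_Ioi le_rfl
  have hα_norm_le {k : ℝ} (hk : 0 < k) : ‖α k‖ ≤ 1 :=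
    (le_add_of_nonneg_right (by positivity)).trans (hα_le k hk)
  have hα'_norm_le {k : ℝ} (hk : 0 < k) : ‖deriv α k‖ ≤ k⁻¹ := by
    rw [← one_div, le_div_iff₀' hk]
    have := hα_le k hk
    rw [abs_of_pos hk] at this
    linarith [norm_nonneg (α k)]
  refine ⟨fun k hk => ?_, ?_, hh'c.norm, fun k hk => ?_, fun k hk => ?_⟩
  · exact ((hα.differentiableOn one_ne_zero).differentiableAt (Ioi_mem_nhds hk)).hasDerivAt.fun_smul
      ((hh.differentiableOn one_ne_zero).differentiableAt (Ioi_mem_nhds hk)).hasDerivAt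
  · exact (hα.continuousOn.smul hh'c).add (hα'c.smul hh.continuousOn)
  · calc ‖α k • h k‖ = ‖α k‖ * ‖h k‖ := norm_smul _ _
      _ ≤ 1 * M := by
        gcongr
        exacts [hα_norm_le hk, hM k hk]
      _ = M := one_mul M
  · calc ‖α k • deriv h k + deriv α k • h k‖
        ≤ ‖α k‖ * ‖deriv h k‖ + ‖deriv α k‖ * ‖h k‖ :=
          (norm_add_le _ _).trans_eq (by rw [norm_smul, norm_smul])
      _ ≤ 1 * ‖deriv h k‖ + k⁻¹ * M := by
          have : 0 ≤ k⁻¹ := inv_nonneg.2 hk.le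
          gcongr
          exacts [hα_norm_le hk, hα'_norm_le hk, hM k hk]
      _ = M * k⁻¹ + ‖deriv h k‖ := by ring

lemma norm_integral_chirp_smul_le_of_le_abs_sub [CompleteSpace E] (t : ℝ) (hδ : 0 < δ)
    (hδp : δ ≤ p) (hpq : p ≤ q) (hX : ∀ k ∈ Icc p q, δ ≤ |k - X|)
    (hg : IsAmplitudeOn g g' η M (Icc p q)) :
    2 * |t| * ‖∫ k in p..q, chirp t X k • g k‖ ≤
      4 * M * δ⁻¹ + √(∫ k in p..q, η k ^ 2) * √δ⁻¹ := by
  have hp : p ∈ Icc p q := left_mem_Icc.2 hpq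
  have hq : q ∈ Icc p q := right_mem_Icc.2 hpq
  have hM : 0 ≤ M := (norm_nonneg _).trans (hg.norm_le p hp)
  have hXpq : X ∉ Icc p q := notMem_of_forall_le_abs_sub hδ hX
  have hinvX := continuousOn_inv_sub hXpq
  have hinv0 : ContinuousOn (fun k : ℝ => k⁻¹) (Icc p q) :=
    continuousOn_inv₀.mono fun k hk => (hδ.trans_le (hδp.trans hk.1)).ne'
  have hgc : ContinuousOn g (Icc p q) := fun k hk =>
    (hg.hasDerivAt k hk).continuousAt.continuousWithinAt
  have hg'c := hg.continuousOn_deriv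
  have hηc := hg.continuousOn_majorant
  have hboundary {k : ℝ} (hk : k ∈ Icc p q) : |(k - X)⁻¹| * ‖g k‖ ≤ δ⁻¹ * M := by
    gcongr
    · rw [abs_inv]
      exact inv_anti₀ hδ (hX k hk)
    · exact hg.norm_le k hk
  have hinterior : ∫ k in p..q, (‖g' k‖ * |(k - X)⁻¹| + ‖g k‖ * (k - X)⁻¹ ^ 2) ≤
      2 * M * δ⁻¹ + √(∫ k in p..q, η k ^ 2) * √δ⁻¹ := by
    refine le_trans (intervalIntegral.integral_mono_on hpq
      (ContinuousOn.intervalIntegrable_of_Icc hpq (by fun_prop))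
      (ContinuousOn.intervalIntegrable_of_Icc hpq (by fun_prop)) fun k hk => ?_)
      (integral_nonstationary_terms_le hδ hδp hpq hX hM hηc)
    calc ‖g' k‖ * |(k - X)⁻¹| + ‖g k‖ * (k - X)⁻¹ ^ 2
        ≤ (M * k⁻¹ + η k) * |(k - X)⁻¹| + M * (k - X)⁻¹ ^ 2 := by
          gcongr
          · exact hg.norm_deriv_le k hk
          · exact hg.norm_le k hk
      _ = M * (k⁻¹ * |(k - X)⁻¹|) + η k * |(k - X)⁻¹| + M * (k - X)⁻¹ ^ 2 := by ring
  linarith [norm_integral_chirp_smul_le t hpq hXpq hg.hasDerivAt hg'c, hboundary hp, hboundary hq]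

end Chirp

section HalfLine

variable {E : Type*} [NormedAddCommGroup E] [NormedSpace ℂ E] [CompleteSpace E]
  {g g' : ℝ → E} {η : ℝ → ℝ} {t X p q δ M : ℝ}

lemma norm_integral_chirp_smul_le_of_isAmplitudeOn_Ioi (ht : 0 < t) (hδ : 0 < δ)
    (hg : IsAmplitudeOn g g' η M (Ioi 0)) (hη : IntegrableOn (fun k => η k ^ 2) (Ioi 0))
    (hδp : δ ≤ p) (hpq : p ≤ q) (hX : ∀ k ∈ Icc p q, δ ≤ |k - X|) :
    ‖∫ k in p..q, chirp t X k • g k‖ ≤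
      (4 * M * δ⁻¹ + √(∫ k in Ioi 0, η k ^ 2) * √δ⁻¹) / (2 * t) := by
  have hpos : Icc p q ⊆ Ioi 0 := fun k hk => hδ.trans_le (hδp.trans hk.1)
  have hη_le : ∫ k in p..q, η k ^ 2 ≤ ∫ k in Ioi 0, η k ^ 2 := by
    rw [intervalIntegral.integral_of_le hpq]
    exact setIntegral_mono_set hη (ae_of_all _ fun k => sq_nonneg _)
      (Ioc_subset_Icc_self.trans hpos).eventuallyLE
  rw [le_div_iff₀' (by positivity)]
  calc 2 * t * ‖∫ k in p..q, chirp t X k • g k‖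
      = 2 * |t| * ‖∫ k in p..q, chirp t X k • g k‖ := by rw [abs_of_pos ht]
    _ ≤ 4 * M * δ⁻¹ + √(∫ k in p..q, η k ^ 2) * √δ⁻¹ :=
        norm_integral_chirp_smul_le_of_le_abs_sub t hδ hδp hpq hX (hg.mono hpos)
    _ ≤ 4 * M * δ⁻¹ + √(∫ k in Ioi 0, η k ^ 2) * √δ⁻¹ := by gcongr

lemma norm_integral_Ioi_chirp_smul_le_of_le_abs_sub (ht : 0 < t) (hδ : 0 < δ)
    (hg : IsAmplitudeOn g g' η M (Ioi 0)) (hη : IntegrableOn (fun k => η k ^ 2) (Ioi 0))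
    (hg_int : IntegrableOn g (Ioi 0)) (hδp : δ ≤ p) (hX : ∀ k ≥ p, δ ≤ |k - X|) :
    ‖∫ k in Ioi p, chirp t X k • g k‖ ≤
      (4 * M * δ⁻¹ + √(∫ k in Ioi 0, η k ^ 2) * √δ⁻¹) / (2 * t) := by
  have hF_int : IntegrableOn (fun k => chirp t X k • g k) (Ioi p) :=
    integrableOn_chirp_smul t X (hg_int.mono_set (Ioi_subset_Ioi (hδ.le.trans hδp)))
  refine le_of_tendsto (intervalIntegral_tendsto_integral_Ioi p hF_int tendsto_id).norm ?_
  filter_upwards [eventually_ge_atTop p] with q hpq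
  exact norm_integral_chirp_smul_le_of_isAmplitudeOn_Ioi ht hδ hg hη hδp hpq
    fun k hk => hX k hk.1

lemma norm_integral_Ioi_chirp_smul_le_of_scale (X : ℝ) (ht : 0 < t) (hδ : 0 < δ)
    (hg : IsAmplitudeOn g g' η M (Ioi 0)) (hη : IntegrableOn (fun k => η k ^ 2) (Ioi 0))
    (hg_int : IntegrableOn g (Ioi 0)) :
    ‖∫ k in Ioi 0, chirp t X k • g k‖ ≤
      3 * δ * M + (4 * M * δ⁻¹ + √(∫ k in Ioi 0, η k ^ 2) * √δ⁻¹) / t := by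
  set F : ℝ → E := fun k => chirp t X k • g k
  set N := (4 * M * δ⁻¹ + √(∫ k in Ioi 0, η k ^ 2) * √δ⁻¹) / (2 * t) with hN
  set l := max δ (X - δ)
  set r := max δ (X + δ)
  have hδl : δ ≤ l := le_max_left _ _
  have hδr : δ ≤ r := le_max_left _ _
  have hlr : l ≤ r := max_le_max le_rfl (by linarith)
  have hM : 0 ≤ M := (norm_nonneg _).trans (hg.norm_le δ hδ)
  have hF_int {b : ℝ} (hb : 0 ≤ b) : IntegrableOn F (Ioi b) :=
    (integrableOn_chirp_smul t X hg_int).mono_set (Ioi_subset_Ioi hb)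
  have hshort {b c : ℝ} (hb : 0 ≤ b) (hbc : b ≤ c) : ‖∫ k in b..c, F k‖ ≤ M * (c - b) :=
    norm_integral_chirp_smul_le_mul_sub (fun k hk => hg.norm_le k (hb.trans_lt hk.1)) hbc
  have hnear_zero : ‖∫ k in 0..δ, F k‖ ≤ M * δ := by simpa using hshort le_rfl hδ.le
  have hnear_X : ‖∫ k in l..r, F k‖ ≤ M * (2 * δ) := by
    refine (hshort (hδ.le.trans hδl) hlr).trans ?_
    have hrl : r ≤ l + 2 * δ :=
      max_le (by linarith) (by linarith [le_max_right δ (X - δ)])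
    gcongr
    linarith
  have hleft : ‖∫ k in δ..l, F k‖ ≤ N := by
    rcases le_total (X - δ) δ with hle | hle
    · rw [show l = δ from max_eq_left hle, intervalIntegral.integral_same, norm_zero]
      positivity
    · refine norm_integral_chirp_smul_le_of_isAmplitudeOn_Ioi ht hδ hg hη le_rfl hδl fun k hk => ?_
      have hk_le : k ≤ X - δ := hk.2.trans_eq (max_eq_right hle)
      exact le_abs.2 (Or.inr (by linarith))
  have hright : ‖∫ k in Ioi r, F k‖ ≤ N := by
    refine norm_integral_Ioi_chirp_smul_le_of_le_abs_sub ht hδ hg hη hg_int hδr fun k hk => ?_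
    have hk_ge : X + δ ≤ k := (le_max_right _ _).trans hk
    exact le_abs.2 (Or.inl (by linarith))
  have hsplit : ∫ k in Ioi 0, F k =
      (∫ k in 0..δ, F k) + ((∫ k in δ..l, F k) + ((∫ k in l..r, F k) + ∫ k in Ioi r, F k)) := by
    rw [intervalIntegral.integral_interval_add_Ioi, intervalIntegral.integral_interval_add_Ioi,
      intervalIntegral.integral_interval_add_Ioi] <;> apply hF_int <;> linarith
  calc ‖∫ k in Ioi 0, F k‖ ≤ M * δ + (N + (M * (2 * δ) + N)) := by
        rw [hsplit]
        exact norm_add_le_of_le hnear_zero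
          (norm_add_le_of_le hleft (norm_add_le_of_le hnear_X hright))
    _ = 3 * δ * M + (4 * M * δ⁻¹ + √(∫ k in Ioi 0, η k ^ 2) * √δ⁻¹) / t := by
        rw [hN]
        field_simp
        ring

lemma norm_integral_Ioi_chirp_smul_le (X : ℝ) (ht : 0 < t)
    (hg : IsAmplitudeOn g g' η M (Ioi 0)) (hη : IntegrableOn (fun k => η k ^ 2) (Ioi 0))
    (hg_int : IntegrableOn g (Ioi 0)) :
    ‖∫ k in Ioi 0, chirp t X k • g k‖ ≤
      7 * (t ^ (-(1/2) : ℝ) * M) + t ^ (-(3/4) : ℝ) * √(∫ k in Ioi 0, η k ^ 2) := by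
  have hδ : 0 < t ^ (-(1/2) : ℝ) := Real.rpow_pos_of_pos ht _
  have hδ_inv : (t ^ (-(1/2) : ℝ))⁻¹ / t = t ^ (-(1/2) : ℝ) := by
    rw [← Real.rpow_neg ht.le, ← Real.rpow_sub_one ht.ne']
    norm_num
  have hsqrt_inv : √(t ^ (-(1/2) : ℝ))⁻¹ / t = t ^ (-(3/4) : ℝ) := by
    rw [← Real.rpow_neg ht.le, Real.sqrt_eq_rpow, ← Real.rpow_mul ht.le,
      ← Real.rpow_sub_one ht.ne']
    norm_num
  refine (norm_integral_Ioi_chirp_smul_le_of_scale X ht hδ hg hη hg_int).trans_eq ?_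
  rw [add_div, mul_div_assoc, mul_div_assoc, hδ_inv, hsqrt_inv]
  ring

end HalfLine

lemma integrable_norm_deriv_sq {E : Type*} [NormedAddCommGroup E] [NormedSpace ℝ E] {h : ℝ → E}
    (hh : ContDiff ℝ 1 h) (hcs : HasCompactSupport h) : Integrable fun k => ‖deriv h k‖ ^ 2 := by
  have hcont : Continuous fun k => ‖deriv h k‖ ^ 2 := (hh.continuous_deriv le_rfl).norm.pow 2
  have hderiv_cs : HasCompactSupport (deriv h) := hcs.deriv
  exact hcont.integrable_of_hasCompactSupport
    (hderiv_cs.comp_left (g := fun v => ‖v‖ ^ 2) (by simp))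

theorem statement_5_general {E : Type*} [NormedAddCommGroup E] [NormedSpace ℂ E] [CompleteSpace E]
    {α : ℝ → ℂ} {h : ℝ → E} {t M : ℝ} (hα : ContDiffOn ℝ 1 α (Ioi 0))
    (hα_le : ∀ k > 0, ‖α k‖ + |k| * ‖deriv α k‖ ≤ 1) (ht : 0 < t) (X : ℝ)
    (hh : ContDiffOn ℝ 1 h (Ioi 0)) (hM : ∀ k > 0, ‖h k‖ ≤ M) (hh_int : IntegrableOn h (Ioi 0))
    (hh'_int : IntegrableOn (fun k => ‖deriv h k‖ ^ 2) (Ioi 0)) :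
    ‖∫ k in Ioi 0, (chirp t X k * α k) • h k‖ ≤
      7 * (t ^ (-(1/2) : ℝ) * M + t ^ (-(3/4) : ℝ) * √(∫ k in Ioi 0, ‖deriv h k‖ ^ 2)) := by
  have hα_norm_le : ∀ k > 0, ‖α k‖ ≤ 1 := fun k hk =>
    (le_add_of_nonneg_right (by positivity)).trans (hα_le k hk)
  have hαh_int : IntegrableOn (fun k => α k • h k) (Ioi 0) :=
    hh_int.bdd_smul 1 (hα.continuousOn.aestronglyMeasurable measurableSet_Ioi)
      (ae_restrict_of_forall_mem measurableSet_Ioi hα_norm_le)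
  have hbound := norm_integral_Ioi_chirp_smul_le X ht (isAmplitudeOn_smul hα hα_le hh hM) hh'_int
    hαh_int
  have : 0 ≤ t ^ (-(3/4) : ℝ) * √(∫ k in Ioi 0, ‖deriv h k‖ ^ 2) := by positivity
  simp only [mul_smul]
  linarith

/-- Stationary phase type lemma: if `|a(x,k)| + |k||∂_k a(x,k)| ≤ 1` on `B × (0,∞)`, then for all
`t > 0`, `X ∈ ℝ`, `x ∈ B` and compactly supported `C¹` functions `h`,
`|∫_0^∞ e^{it(k−X)²} a(x,k) h(k) dk| ≤ C (t^{−1/2}‖h‖_∞ + t^{−3/4}‖h'‖_{L²(0,∞)})`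
with a universal constant `C`. -/
theorem statement_5 : ∃ C : ℝ, 0 < C ∧
    ∀ (B : Set ℝ) (a : ℝ → ℝ → ℂ),
      (∀ x ∈ B, ContDiffOn ℝ 1 (fun k => a x k) (Set.Ioi (0:ℝ))) →
      (∀ x ∈ B, ∀ k : ℝ, 0 < k →
        ‖a x k‖ + |k| * ‖deriv (fun k' => a x k') k‖ ≤ 1) →
      ∀ t : ℝ, 0 < t → ∀ X : ℝ, ∀ x ∈ B, ∀ h : ℝ → ℂ,
        ContDiff ℝ 1 h → HasCompactSupport h →
        ‖∫ k in Set.Ioi (0:ℝ),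
            Complex.exp (Complex.I * (t : ℂ) * ((k : ℂ) - (X : ℂ)) ^ 2) * a x k * h k‖ ≤
          C * (t ^ (-(1/2) : ℝ) * (⨆ k : ℝ, ‖h k‖) +
               t ^ (-(3/4) : ℝ) * Real.sqrt (∫ k in Set.Ioi (0:ℝ), ‖deriv h k‖ ^ 2)) := by
  refine ⟨7, by norm_num, fun B a ha ha_le t ht X x hx h hh hcs => ?_⟩
  exact statement_5_general (ha x hx) (ha_le x hx) ht X hh.contDiffOn
    (fun k _ => le_ciSup (hh.continuous.norm.bddAbove_range_of_hasCompactSupport hcs.norm) k)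
    (hh.continuous.integrable_of_hasCompactSupport hcs).integrableOn
    (integrable_norm_deriv_sq hh hcs).integrableOn
end

section
/- There exists a universal constant C > 0 such that the following holds. Let β ∈ ℝ, M > 0, let Q : ℝ×ℝ → ℂ be measurable with |⟨x⟩^β Q(x,k)| ≤ M for all x, k, and let φ : ℝ → ℂ be measurable with |φ(k)| ≤ |k|^{1/2} for all k. Then for every t ≥ 0, every Schwartz function h : ℝ → ℂ, and every x ∈ ℝ: ⟨x⟩^β ( ∫_0^t | ∫_ℝ Q(x,k) φ(k) e^{ik²s} h(k) dk |² ds )^{1/2} ≤ C M ‖h‖_{L²(ℝ)}. -/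
/-!
On each half-line the substitution `u = k²` turns `∫ e^{ik²s} g(k) dk` into a Fourier integral in
`u` of the density `g(k) / (2|k|)`. Plancherel in `s`, over the whole time line, gives each
half-line contribution the squared norm `π ∫ |g(k)|² / |k| dk`, so together they are bounded by
`2π ∫ |g(k)|² / |k| dk`. For `g = Q(x,·) φ h` the Jacobian factor `1 / |k|` is exactly absorbed by
`|φ(k)|² ≤ |k|`, while `|Q(x,k)| ≤ M ⟨x⟩^{-β}` yields the weight; hence `C = √(2π)`.
-/

open MeasureTheory Filter Topology Set

open scoped ContDiff ENNReal FourierTransform SchwartzMap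

section Plancherel

variable {V F : Type*} [NormedAddCommGroup V] [InnerProductSpace ℝ V] [FiniteDimensional ℝ V]
  [MeasurableSpace V] [BorelSpace V] [NormedAddCommGroup F] [InnerProductSpace ℂ F]
  [CompleteSpace F] {f : V → F}

theorem integral_schwartz_smul_fourier_toLp (hf₁ : Integrable f) (hf₂ : MemLp f 2)
    (g : 𝓢(V, ℂ)) :
    ∫ ξ, g ξ • (𝓕 (hf₂.toLp f) : Lp F 2 (volume : Measure V)) ξ = ∫ ξ, g ξ • 𝓕 f ξ := by
  calc ∫ ξ, g ξ • (𝓕 (hf₂.toLp f) : Lp F 2 (volume : Measure V)) ξ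
      = ∫ x, 𝓕 g x • hf₂.toLp f x := by
        rw [← Lp.toTemperedDistribution_apply, ← Lp.fourier_toTemperedDistribution_eq,
          TemperedDistribution.fourier_apply, Lp.toTemperedDistribution_apply]
    _ = ∫ x, 𝓕 (g : V → ℂ) x • f x :=
        integral_congr_ae <| hf₂.coeFn_toLp.mono fun x hx ↦ by
          simp only [hx, SchwartzMap.fourier_coe]
    _ = ∫ ξ, g ξ • 𝓕 f ξ := by
        simpa using! VectorFourier.integral_fourierIntegral_smul_eq_flip (L := innerₗ V)
          Real.continuous_fourierChar continuous_inner g.integrable hf₁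

theorem coeFn_fourier_toLp (hf₁ : Integrable f) (hf₂ : MemLp f 2) :
    (𝓕 (hf₂.toLp f) : Lp F 2 (volume : Measure V)) =ᵐ[volume] 𝓕 f := by
  have hcont : Continuous (𝓕 f) :=
    VectorFourier.fourierIntegral_continuous Real.continuous_fourierChar continuous_inner hf₁
  refine ae_eq_of_integral_contDiff_smul_eq ((Lp.memLp _).locallyIntegrable one_le_two)
    hcont.locallyIntegrable fun g hg hg_supp ↦ ?_
  have hgℂ_supp : HasCompactSupport (Complex.ofRealCLM ∘ g) := hg_supp.comp_left rfl
  have hgℂ : ContDiff ℝ ∞ (Complex.ofRealCLM ∘ g) := by fun_prop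
  simpa using integral_schwartz_smul_fourier_toLp hf₁ hf₂ (hgℂ_supp.toSchwartzMap hgℂ)

theorem eLpNorm_two_fourier (hf₁ : Integrable f) (hf₂ : MemLp f 2) :
    eLpNorm (𝓕 f) 2 = eLpNorm f 2 := by
  rw [← eLpNorm_congr_ae (coeFn_fourier_toLp hf₁ hf₂), ← Lp.enorm_def, ← Lp.enorm_toLp hf₂,
    ← ofReal_norm, Lp.norm_fourier_eq, ofReal_norm]

end Plancherel

section SquareNorm

variable {α E : Type*} [MeasurableSpace α] [NormedAddCommGroup E] {μ : Measure α} {f : α → E}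

theorem eLpNorm_two_sq_eq_lintegral : eLpNorm f 2 μ ^ 2 = ∫⁻ a, ‖f a‖ₑ ^ 2 ∂μ := by
  simpa using eLpNorm_nnreal_pow_eq_lintegral (p := 2) (f := f) (μ := μ) two_ne_zero

theorem memLp_two_of_lintegral_enorm_sq_ne_top (hf : AEStronglyMeasurable f μ)
    (hfin : ∫⁻ a, ‖f a‖ₑ ^ 2 ∂μ ≠ ⊤) : MemLp f 2 μ := by
  rw [← eLpNorm_two_sq_eq_lintegral] at hfin
  exact ⟨hf, ENNReal.pow_lt_top_iff.1 hfin.lt_top |>.resolve_right two_ne_zero⟩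

theorem lintegral_enorm_sq_eq_ofReal_integral (hf : MemLp f 2 μ) :
    ∫⁻ a, ‖f a‖ₑ ^ 2 ∂μ = ENNReal.ofReal (∫ a, ‖f a‖ ^ 2 ∂μ) := by
  rw [ofReal_integral_eq_lintegral_ofReal ((memLp_two_iff_integrable_sq_norm hf.1).1 hf)
    (ae_of_all _ fun a ↦ sq_nonneg _)]
  simp only [ENNReal.ofReal_pow (norm_nonneg _), ofReal_norm]

theorem enorm_add_sq_le (v w : E) : ‖v + w‖ₑ ^ 2 ≤ 2 * (‖v‖ₑ ^ 2 + ‖w‖ₑ ^ 2) := by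
  refine (pow_le_pow_left' (enorm_add_le v w) 2).trans ?_
  simpa [show (2 : ℝ) - 1 = 1 by norm_num] using
    ENNReal.rpow_add_le_mul_rpow_add_rpow ‖v‖ₑ ‖w‖ₑ one_le_two

end SquareNorm

/-- The superposition `s ↦ ∫ e^{iψ(k)s} g(k) dμ(k)` of oscillations with phase `ψ` and
amplitude `g`. -/
noncomputable def oscillatoryIntegral {α E : Type*} [MeasurableSpace α] [NormedAddCommGroup E]
    [NormedSpace ℂ E] (ψ : α → ℝ) (g : α → E) (μ : Measure α) (s : ℝ) : E :=
  ∫ k, Complex.exp (Complex.I * ψ k * s) • g k ∂μ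

section OscillatoryIntegral

variable {α E : Type*} [MeasurableSpace α] [NormedAddCommGroup E] [NormedSpace ℂ E]
  {μ : Measure α} {ψ : α → ℝ} {g : α → E}

theorem norm_cexp_I_mul_smul (u s : ℝ) (v : E) :
    ‖Complex.exp (Complex.I * u * s) • v‖ = ‖v‖ := by
  rw [norm_smul, mul_assoc, ← Complex.ofReal_mul, Complex.norm_exp_I_mul_ofReal, one_mul]

theorem integrable_cexp_phase_smul (hψ : AEMeasurable ψ μ) (hg : Integrable g μ) (s : ℝ) :
    Integrable (fun k ↦ Complex.exp (Complex.I * ψ k * s) • g k) μ := by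
  refine hg.congr' (AEStronglyMeasurable.smul ?_ hg.1)
    (ae_of_all _ fun k ↦ (norm_cexp_I_mul_smul _ _ _).symm)
  exact AEMeasurable.aestronglyMeasurable (by fun_prop)

theorem continuous_oscillatoryIntegral (hψ : AEMeasurable ψ μ) (hg : Integrable g μ) :
    Continuous (oscillatoryIntegral ψ g μ) :=
  continuous_of_dominated (fun s ↦ (integrable_cexp_phase_smul hψ hg s).1)
    (fun _ ↦ ae_of_all _ fun _ ↦ (norm_cexp_I_mul_smul _ _ _).le) hg.norm
    (ae_of_all _ fun _ ↦ by fun_prop)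

theorem oscillatoryIntegral_add_measure {ν : Measure α} (hψ : AEMeasurable ψ (μ + ν))
    (hg : Integrable g (μ + ν)) (s : ℝ) :
    oscillatoryIntegral ψ g (μ + ν) s =
      oscillatoryIntegral ψ g μ s + oscillatoryIntegral ψ g ν s :=
  have hint := integrable_cexp_phase_smul hψ hg s
  integral_add_measure hint.left_of_add_measure hint.right_of_add_measure

theorem oscillatoryIntegral_id_eq_fourier (g : ℝ → E) (s : ℝ) :
    oscillatoryIntegral id g volume s = 𝓕 g ((-(2 * Real.pi)⁻¹) * s) := by
  rw [Real.fourier_real_eq_integral_exp_smul]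
  refine integral_congr_ae (ae_of_all _ fun k ↦ ?_)
  dsimp only
  congr 2
  push_cast [id]
  field_simp

end OscillatoryIntegral

theorem lintegral_comp_mul_left {a : ℝ} (ha : a ≠ 0) (f : ℝ → ℝ≥0∞) :
    ∫⁻ s, f (a * s) = ENNReal.ofReal |a⁻¹| * ∫⁻ u, f u := by
  rw [← smul_eq_mul, ← lintegral_smul_measure, ← Real.map_volume_mul_left ha]
  exact (lintegral_map_equiv f (Homeomorph.mulLeft₀ a ha).toMeasurableEquiv).symm

/-- The amplitude `g` on `S`, expressed as a density in the frequency `u = ψ k` and extended by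
zero. Here `ψ'` is the derivative of `ψ`, assumed injective on `S`. -/
noncomputable def frequencyDensity {E : Type*} [NormedAddCommGroup E] [NormedSpace ℝ E]
    (ψ ψ' : ℝ → ℝ) (S : Set ℝ) (g : ℝ → E) : ℝ → E :=
  (ψ '' S).indicator fun u ↦
    |ψ' (Function.invFunOn ψ S u)|⁻¹ • g (Function.invFunOn ψ S u)

section InjectivePhase

variable {E : Type*} [NormedAddCommGroup E] {ψ ψ' : ℝ → ℝ} {S : Set ℝ} {g : ℝ → E}

section Density

variable [NormedSpace ℝ E]

theorem frequencyDensity_apply (hinj : InjOn ψ S) {k : ℝ} (hk : k ∈ S) :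
    frequencyDensity ψ ψ' S g (ψ k) = |ψ' k|⁻¹ • g k := by
  rw [frequencyDensity, indicator_of_mem (mem_image_of_mem ψ hk), hinj.leftInvOn_invFunOn hk]

theorem integrable_frequencyDensity (hS : MeasurableSet S)
    (hψ : ∀ k ∈ S, HasDerivWithinAt ψ (ψ' k) S k) (hψ' : ∀ k ∈ S, ψ' k ≠ 0) (hinj : InjOn ψ S)
    (hg : IntegrableOn g S) : Integrable (frequencyDensity ψ ψ' S g) := by
  have hon : IntegrableOn (frequencyDensity ψ ψ' S g) (ψ '' S) := by
    rw [integrableOn_image_iff_integrableOn_abs_deriv_smul hS hψ hinj]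
    refine hg.congr_fun (fun k hk ↦ ?_) hS
    rw [frequencyDensity_apply hinj hk, smul_inv_smul₀ (abs_ne_zero.2 (hψ' k hk))]
  exact hon.integrable_of_forall_notMem_eq_zero fun u hu ↦ indicator_of_notMem hu _

theorem lintegral_enorm_sq_frequencyDensity (hS : MeasurableSet S)
    (hψ : ∀ k ∈ S, HasDerivWithinAt ψ (ψ' k) S k) (hψ' : ∀ k ∈ S, ψ' k ≠ 0)
    (hinj : InjOn ψ S) :
    ∫⁻ u, ‖frequencyDensity ψ ψ' S g u‖ₑ ^ 2 = ∫⁻ k in S, ‖g k‖ₑ ^ 2 / ‖ψ' k‖ₑ := by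
  have hsupp : Function.support (fun u ↦ ‖frequencyDensity ψ ψ' S g u‖ₑ ^ 2) ⊆ ψ '' S := by
    intro u hu
    contrapose! hu
    simp [frequencyDensity, indicator_of_notMem hu]
  rw [← setLIntegral_eq_of_support_subset hsupp,
    lintegral_image_eq_lintegral_abs_deriv_mul hS hψ hinj]
  refine setLIntegral_congr_fun hS fun k hk ↦ ?_
  have h0 : ‖ψ' k‖ₑ ≠ 0 := enorm_ne_zero.2 (hψ' k hk)
  rw [frequencyDensity_apply hinj hk, enorm_smul, enorm_inv (abs_ne_zero.2 (hψ' k hk)),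
    Real.enorm_abs, ← Real.enorm_eq_ofReal_abs, mul_pow, sq (‖ψ' k‖ₑ⁻¹), ← mul_assoc, ← mul_assoc,
    ENNReal.mul_inv_cancel h0 enorm_ne_top, one_mul, mul_comm, div_eq_mul_inv]

end Density

theorem oscillatoryIntegral_id_frequencyDensity [NormedSpace ℂ E] (hS : MeasurableSet S)
    (hψ : ∀ k ∈ S, HasDerivWithinAt ψ (ψ' k) S k) (hψ' : ∀ k ∈ S, ψ' k ≠ 0)
    (hinj : InjOn ψ S) :
    oscillatoryIntegral id (frequencyDensity ψ ψ' S g) volume =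
      oscillatoryIntegral ψ g (volume.restrict S) := by
  ext s
  have hsupp : ∀ u, u ∉ ψ '' S →
      Complex.exp (Complex.I * u * s) • frequencyDensity ψ ψ' S g u = 0 := fun u hu ↦ by
    rw [frequencyDensity, indicator_of_notMem hu, smul_zero]
  simp only [oscillatoryIntegral, id]
  rw [← setIntegral_eq_integral_of_forall_compl_eq_zero hsupp,
    integral_image_eq_integral_abs_deriv_smul hS hψ hinj]
  refine setIntegral_congr_fun hS fun k hk ↦ ?_
  rw [frequencyDensity_apply hinj hk, smul_comm, smul_inv_smul₀ (abs_ne_zero.2 (hψ' k hk))]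

end InjectivePhase

section Smoothing

variable {E : Type*} [NormedAddCommGroup E] [InnerProductSpace ℂ E] [CompleteSpace E] {g : ℝ → E}

theorem lintegral_enorm_sq_oscillatoryIntegral_id (hg₁ : Integrable g) (hg₂ : MemLp g 2) :
    ∫⁻ s, ‖oscillatoryIntegral id g volume s‖ₑ ^ 2 =
      ENNReal.ofReal (2 * Real.pi) * ∫⁻ u, ‖g u‖ₑ ^ 2 := by
  have hscale : -(2 * Real.pi)⁻¹ ≠ 0 := by simp [Real.pi_ne_zero]
  simp only [oscillatoryIntegral_id_eq_fourier]
  rw [lintegral_comp_mul_left hscale fun ξ ↦ ‖𝓕 g ξ‖ₑ ^ 2, ← eLpNorm_two_sq_eq_lintegral,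
    eLpNorm_two_fourier hg₁ hg₂, eLpNorm_two_sq_eq_lintegral, inv_neg, inv_inv, abs_neg,
    abs_of_pos Real.two_pi_pos]

theorem lintegral_enorm_sq_oscillatoryIntegral_of_injOn {ψ ψ' : ℝ → ℝ} {S : Set ℝ}
    (hS : MeasurableSet S) (hψ : ∀ k ∈ S, HasDerivWithinAt ψ (ψ' k) S k)
    (hψ' : ∀ k ∈ S, ψ' k ≠ 0) (hinj : InjOn ψ S) (hg : IntegrableOn g S)
    (hfin : ∫⁻ k in S, ‖g k‖ₑ ^ 2 / ‖ψ' k‖ₑ ≠ ⊤) :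
    ∫⁻ s, ‖oscillatoryIntegral ψ g (volume.restrict S) s‖ₑ ^ 2 =
      ENNReal.ofReal (2 * Real.pi) * ∫⁻ k in S, ‖g k‖ₑ ^ 2 / ‖ψ' k‖ₑ := by
  have hG := integrable_frequencyDensity hS hψ hψ' hinj hg
  rw [← lintegral_enorm_sq_frequencyDensity hS hψ hψ' hinj] at hfin ⊢
  rw [← oscillatoryIntegral_id_frequencyDensity hS hψ hψ' hinj,
    lintegral_enorm_sq_oscillatoryIntegral_id hG
      (memLp_two_of_lintegral_enorm_sq_ne_top hG.1 hfin)]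

theorem lintegral_enorm_sq_oscillatoryIntegral_sq_of_injOn {S : Set ℝ} (hS : MeasurableSet S)
    (h0 : 0 ∉ S) (hinj : InjOn (fun k : ℝ ↦ k ^ 2) S) (hg : IntegrableOn g S)
    (hfin : ∫⁻ k in S, ‖g k‖ₑ ^ 2 / ‖k‖ₑ ≠ ⊤) :
    ∫⁻ s, ‖oscillatoryIntegral (fun k ↦ k ^ 2) g (volume.restrict S) s‖ₑ ^ 2 =
      ENNReal.ofReal Real.pi * ∫⁻ k in S, ‖g k‖ₑ ^ 2 / ‖k‖ₑ := by
  have hderiv : ∀ k ∈ S, HasDerivWithinAt (fun k : ℝ ↦ k ^ 2) (2 * k) S k := fun k _ ↦ by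
    simpa using (hasDerivAt_pow 2 k).hasDerivWithinAt
  have hderiv_ne : ∀ k ∈ S, 2 * k ≠ 0 := fun k hk ↦
    mul_ne_zero two_ne_zero (ne_of_mem_of_not_mem hk h0)
  have hhalf : ∫⁻ k in S, ‖g k‖ₑ ^ 2 / ‖2 * k‖ₑ = 2⁻¹ * ∫⁻ k in S, ‖g k‖ₑ ^ 2 / ‖k‖ₑ := by
    have htwo : ‖(2 : ℝ)‖ₑ = 2 := by simp [← ofReal_norm]
    rw [← lintegral_const_mul' _ _ (by simp)]
    refine lintegral_congr fun k ↦ ?_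
    rw [enorm_mul, htwo, div_eq_mul_inv, div_eq_mul_inv, ENNReal.mul_inv (by simp) (by simp),
      mul_left_comm]
  rw [lintegral_enorm_sq_oscillatoryIntegral_of_injOn hS hderiv hderiv_ne hinj hg
    (hhalf ▸ ENNReal.mul_ne_top (by simp) hfin), hhalf, ← mul_assoc,
    ENNReal.ofReal_mul zero_le_two, ENNReal.ofReal_ofNat, mul_comm 2, mul_assoc (ENNReal.ofReal _),
    ENNReal.mul_inv_cancel two_ne_zero ENNReal.ofNat_ne_top, mul_one]

theorem injOn_sq_Ioi : InjOn (fun k : ℝ ↦ k ^ 2) (Ioi 0) := fun _ hk _ hl h ↦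
  (sq_eq_sq₀ (le_of_lt hk) (le_of_lt hl)).1 h

theorem injOn_sq_Iio : InjOn (fun k : ℝ ↦ k ^ 2) (Iio 0) := fun _ hk _ hl h ↦
  neg_injective <| injOn_sq_Ioi (mem_Ioi.2 (neg_pos.2 hk)) (mem_Ioi.2 (neg_pos.2 hl))
    (by simpa using h)

theorem restrict_Iio_add_restrict_Ioi (μ : Measure ℝ) [NullSingletonClass μ] (a : ℝ) :
    μ.restrict (Iio a) + μ.restrict (Ioi a) = μ := by
  rw [restrict_Iio_eq_restrict_Iic, ← compl_Iic,
    Measure.restrict_add_restrict_compl measurableSet_Iic]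

theorem lintegral_enorm_sq_oscillatoryIntegral_sq_le (hg : Integrable g) :
    ∫⁻ s, ‖oscillatoryIntegral (fun k ↦ k ^ 2) g volume s‖ₑ ^ 2 ≤
      ENNReal.ofReal (2 * Real.pi) * ∫⁻ k, ‖g k‖ₑ ^ 2 / ‖k‖ₑ := by
  rcases eq_or_ne (∫⁻ k, ‖g k‖ₑ ^ 2 / ‖k‖ₑ) ⊤ with htop | hfin
  · simp [htop, ENNReal.mul_top, Real.pi_pos]
  let F (S : Set ℝ) : ℝ → E := oscillatoryIntegral (fun k ↦ k ^ 2) g (volume.restrict S)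
  have hF : Continuous (F (Iio 0)) :=
    continuous_oscillatoryIntegral (by fun_prop) hg.integrableOn
  have hhalf {S : Set ℝ} (hS : MeasurableSet S) (h0 : 0 ∉ S)
      (hinj : InjOn (fun k : ℝ ↦ k ^ 2) S) :
      ∫⁻ s, ‖F S s‖ₑ ^ 2 = ENNReal.ofReal Real.pi * ∫⁻ k in S, ‖g k‖ₑ ^ 2 / ‖k‖ₑ :=
    lintegral_enorm_sq_oscillatoryIntegral_sq_of_injOn hS h0 hinj hg.integrableOn
      (ne_top_of_le_ne_top hfin (setLIntegral_le_lintegral S _))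
  have hsplit := restrict_Iio_add_restrict_Ioi volume 0
  calc ∫⁻ s, ‖oscillatoryIntegral (fun k ↦ k ^ 2) g volume s‖ₑ ^ 2
      = ∫⁻ s, ‖F (Iio 0) s + F (Ioi 0) s‖ₑ ^ 2 := lintegral_congr fun s ↦ by
        rw [← oscillatoryIntegral_add_measure (by fun_prop) (by rwa [hsplit]), hsplit]
    _ ≤ ∫⁻ s, 2 * (‖F (Iio 0) s‖ₑ ^ 2 + ‖F (Ioi 0) s‖ₑ ^ 2) :=
        lintegral_mono fun s ↦ enorm_add_sq_le _ _
    _ = 2 * ((∫⁻ s, ‖F (Iio 0) s‖ₑ ^ 2) + ∫⁻ s, ‖F (Ioi 0) s‖ₑ ^ 2) := by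
        rw [lintegral_const_mul' _ _ ENNReal.ofNat_ne_top,
          lintegral_add_left (hF.enorm.measurable.pow_const 2)]
    _ = 2 * (ENNReal.ofReal Real.pi * ∫⁻ k, ‖g k‖ₑ ^ 2 / ‖k‖ₑ) := by
        rw [hhalf measurableSet_Iio self_notMem_Iio injOn_sq_Iio,
          hhalf measurableSet_Ioi self_notMem_Ioi injOn_sq_Ioi, ← mul_add, ← lintegral_add_measure,
          hsplit]
    _ = ENNReal.ofReal (2 * Real.pi) * ∫⁻ k, ‖g k‖ₑ ^ 2 / ‖k‖ₑ := by
        rw [ENNReal.ofReal_mul zero_le_two, ENNReal.ofReal_ofNat, mul_assoc]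

end Smoothing

section Weighted

variable {E : Type*} [NormedAddCommGroup E]

theorem lintegral_enorm_sq_div_enorm_le {F : Type*} [NormedAddCommGroup F] {g : ℝ → E} {h : ℝ → F}
    {A : ℝ} (hgh : ∀ k, ‖g k‖ ≤ A * (√|k| * ‖h k‖)) :
    ∫⁻ k, ‖g k‖ₑ ^ 2 / ‖k‖ₑ ≤ ENNReal.ofReal (A ^ 2) * ∫⁻ k, ‖h k‖ₑ ^ 2 := by
  rw [← lintegral_const_mul' _ _ ENNReal.ofReal_ne_top]
  refine lintegral_mono fun k ↦ ENNReal.div_le_of_le_mul ?_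
  calc ‖g k‖ₑ ^ 2 = ENNReal.ofReal (‖g k‖ ^ 2) := by
        rw [ENNReal.ofReal_pow (norm_nonneg _), ofReal_norm]
    _ ≤ ENNReal.ofReal (A ^ 2 * ‖h k‖ ^ 2 * |k|) := by
        refine ENNReal.ofReal_le_ofReal ((pow_le_pow_left₀ (norm_nonneg _) (hgh k) 2).trans_eq ?_)
        rw [mul_pow, mul_pow, Real.sq_sqrt (abs_nonneg k)]
        ring
    _ = ENNReal.ofReal (A ^ 2) * ‖h k‖ₑ ^ 2 * ‖k‖ₑ := by
        rw [ENNReal.ofReal_mul (by positivity), ENNReal.ofReal_mul (by positivity),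
          ENNReal.ofReal_pow (norm_nonneg _), ofReal_norm, Real.enorm_eq_ofReal_abs]

variable [InnerProductSpace ℂ E] [CompleteSpace E] {g h : ℝ → E} {A : ℝ}

theorem memLp_two_oscillatoryIntegral_sq (hg : Integrable g) (hh : MemLp h 2)
    (hgh : ∀ k, ‖g k‖ ≤ A * (√|k| * ‖h k‖)) :
    MemLp (oscillatoryIntegral (fun k ↦ k ^ 2) g volume) 2 := by
  refine memLp_two_of_lintegral_enorm_sq_ne_top
    (continuous_oscillatoryIntegral (by fun_prop) hg).aestronglyMeasurable
    (ne_top_of_le_ne_top ?_ ((lintegral_enorm_sq_oscillatoryIntegral_sq_le hg).trans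
      (mul_le_mul_right (lintegral_enorm_sq_div_enorm_le hgh) _)))
  rw [lintegral_enorm_sq_eq_ofReal_integral hh]
  finiteness

theorem integral_norm_sq_oscillatoryIntegral_sq_le (hg : Integrable g) (hh : MemLp h 2)
    (hgh : ∀ k, ‖g k‖ ≤ A * (√|k| * ‖h k‖)) :
    ∫ s, ‖oscillatoryIntegral (fun k ↦ k ^ 2) g volume s‖ ^ 2 ≤
      2 * Real.pi * (A ^ 2 * ∫ k, ‖h k‖ ^ 2) := by
  rw [← ENNReal.ofReal_le_ofReal_iff (by positivity),
    ← lintegral_enorm_sq_eq_ofReal_integral (memLp_two_oscillatoryIntegral_sq hg hh hgh),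
    ENNReal.ofReal_mul Real.two_pi_pos.le, ENNReal.ofReal_mul (sq_nonneg A),
    ← lintegral_enorm_sq_eq_ofReal_integral hh]
  exact (lintegral_enorm_sq_oscillatoryIntegral_sq_le hg).trans
    (mul_le_mul_right (lintegral_enorm_sq_div_enorm_le hgh) _)

end Weighted

theorem jap_rpow_pos (x β : ℝ) : 0 < jap x ^ β :=
  Real.rpow_pos_of_pos (Real.sqrt_pos.2 (by positivity)) β

theorem norm_mul_smul_le_of_weighted {E : Type*} [NormedAddCommGroup E] [NormedSpace ℂ E]
    {J M r : ℝ} (hJ : 0 < J) {q p : ℂ} (hq : J * ‖q‖ ≤ M) (hp : ‖p‖ ≤ r) (v : E) :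
    ‖(q * p) • v‖ ≤ M / J * (r * ‖v‖) := by
  have hq' : ‖q‖ ≤ M / J := (le_div_iff₀' hJ).2 hq
  have hM : 0 ≤ M / J := (norm_nonneg q).trans hq'
  rw [norm_smul, norm_mul, mul_assoc]
  gcongr

theorem statement_6_general {E : Type*} [NormedAddCommGroup E] [InnerProductSpace ℂ E]
    [CompleteSpace E] {β M : ℝ} {Q : ℝ → ℝ → ℂ} (hQ : ∀ x, AEStronglyMeasurable (Q x))
    (hQM : ∀ x k, jap x ^ β * ‖Q x k‖ ≤ M) {φ : ℝ → ℂ} (hφ : AEStronglyMeasurable φ)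
    (hφk : ∀ k, ‖φ k‖ ≤ √|k|) {h : ℝ → E} (hh : MemLp h 2)
    (hhk : Integrable fun k ↦ √|k| • h k) (x : ℝ) :
    MemLp (fun s : ℝ ↦
        ∫ k : ℝ, (Q x k * φ k * Complex.exp (Complex.I * (k : ℂ) ^ 2 * (s : ℂ))) • h k) 2 ∧
      jap x ^ β * √(∫ s : ℝ,
          ‖∫ k : ℝ, (Q x k * φ k * Complex.exp (Complex.I * (k : ℂ) ^ 2 * (s : ℂ))) • h k‖ ^ 2) ≤
        √(2 * Real.pi) * M * √(∫ k, ‖h k‖ ^ 2) := by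
  have hJ := jap_rpow_pos x β
  have hM : 0 ≤ M := (mul_nonneg hJ.le (norm_nonneg (Q x 0))).trans (hQM x 0)
  have hbound (k : ℝ) : ‖(Q x k * φ k) • h k‖ ≤ M / jap x ^ β * (√|k| * ‖h k‖) :=
    norm_mul_smul_le_of_weighted hJ (hQM x k) (hφk k) (h k)
  have hint : Integrable fun k ↦ (Q x k * φ k) • h k :=
    (hhk.norm.const_mul (M / jap x ^ β)).mono' (((hQ x).mul hφ).smul hh.1)
      (ae_of_all _ fun k ↦ by
        simpa only [norm_smul, Real.norm_of_nonneg (Real.sqrt_nonneg _)] using hbound k)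
  have hosc (s : ℝ) :
      ∫ k : ℝ, (Q x k * φ k * Complex.exp (Complex.I * (k : ℂ) ^ 2 * (s : ℂ))) • h k =
        oscillatoryIntegral (fun k ↦ k ^ 2) (fun k ↦ (Q x k * φ k) • h k) volume s := by
    simp only [oscillatoryIntegral, Complex.ofReal_pow, smul_smul, mul_comm (Complex.exp _)]
  simp only [hosc]
  refine ⟨memLp_two_oscillatoryIntegral_sq hint hh hbound, ?_⟩
  calc _ ≤ jap x ^ β * √(2 * Real.pi * ((M / jap x ^ β) ^ 2 * ∫ k, ‖h k‖ ^ 2)) := by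
        gcongr
        exact integral_norm_sq_oscillatoryIntegral_sq_le hint hh hbound
    _ = √(2 * Real.pi) * M * √(∫ k, ‖h k‖ ^ 2) := by
        rw [Real.sqrt_mul Real.two_pi_pos.le, Real.sqrt_mul (sq_nonneg _),
          Real.sqrt_sq (div_nonneg hM hJ.le)]
        field_simp

theorem integrable_sqrt_abs_smul_schwartz {E : Type*} [NormedAddCommGroup E] [NormedSpace ℝ E]
    (h : 𝓢(ℝ, E)) : Integrable fun k ↦ √|k| • h k := by
  refine (h.integrable.norm.add (h.integrable_pow_mul volume 1)).mono' (by fun_prop)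
    (ae_of_all _ fun k ↦ ?_)
  have hsqrt : √|k| ≤ 1 + |k| := (Real.sqrt_le_left (by positivity)).2 (by nlinarith [abs_nonneg k])
  rw [norm_smul, Real.norm_of_nonneg (Real.sqrt_nonneg _)]
  calc √|k| * ‖h k‖ ≤ (1 + |k|) * ‖h k‖ := by gcongr
    _ = ‖h k‖ + ‖k‖ ^ 1 * ‖h k‖ := by rw [add_mul, one_mul, pow_one, Real.norm_eq_abs]

theorem intervalIntegral_norm_sq_le_integral {E : Type*} [NormedAddCommGroup E] {f : ℝ → E}
    (hf : MemLp f 2) {a b : ℝ} (hab : a ≤ b) :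
    ∫ s in a..b, ‖f s‖ ^ 2 ≤ ∫ s, ‖f s‖ ^ 2 := by
  rw [intervalIntegral.integral_of_le hab]
  exact setIntegral_le_integral ((memLp_two_iff_integrable_sq_norm hf.1).1 hf)
    (ae_of_all _ fun s ↦ sq_nonneg _)

/-- Homogeneous smoothing estimate: if `|⟨x⟩^β Q(x,k)| ≤ M` and `|φ(k)| ≤ |k|^{1/2}`, then
`⟨x⟩^β ‖∫ Q(x,k) φ(k) e^{ik²s} h(k) dk‖_{L²_s([0,t])} ≤ C M ‖h‖_{L²}`. -/
theorem statement_6 : ∃ C : ℝ, 0 < C ∧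
    ∀ (β M : ℝ), 0 < M →
    ∀ Q : ℝ → ℝ → ℂ, Measurable (Function.uncurry Q) →
      (∀ x k : ℝ, jap x ^ β * ‖Q x k‖ ≤ M) →
    ∀ φ : ℝ → ℂ, Measurable φ → (∀ k : ℝ, ‖φ k‖ ≤ Real.sqrt |k|) →
    ∀ t : ℝ, 0 ≤ t → ∀ h : SchwartzMap ℝ ℂ, ∀ x : ℝ,
      jap x ^ β * Real.sqrt (∫ s in (0:ℝ)..t,
          ‖∫ k : ℝ, Q x k * φ k * Complex.exp (Complex.I * (k : ℂ) ^ 2 * (s : ℂ)) * h k‖ ^ 2) ≤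
        C * M * Real.sqrt (∫ k : ℝ, ‖h k‖ ^ 2) := by
  refine ⟨√(2 * Real.pi), by positivity, fun β M _ Q hQ hQM φ hφ hφk t ht h x ↦ ?_⟩
  obtain ⟨hmem, hle⟩ := statement_6_general (fun y ↦ hQ.of_uncurry_left.aestronglyMeasurable) hQM
    hφ.aestronglyMeasurable hφk (h.memLp 2) (integrable_sqrt_abs_smul_schwartz h) x
  refine le_trans (mul_le_mul_of_nonneg_left ?_ (jap_rpow_pos x β).le) hle
  exact Real.sqrt_le_sqrt (intervalIntegral_norm_sq_le_integral hmem ht)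
end
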